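/- arXiv:1805.02715 — 2 statements merged into one kernel-verified Lean document; each statement's English description precedes it below -/
import Mathlib

section
/- For every k ≥ 1, aw(P_2 □ P_{2k+1}, 3) = 4; that is, every exact 4-coloring of the grid P_2 □ P_{2k+1} contains a rainbow 3-AP, while some exact 3-coloring does not. -/
open SimpleGraph

/-- `v` lists the vertices of a `k`-term arithmetic progression in `G`:
consecutive vertices are at a common distance `d`. -/
def IsAPIn {V : Type*} (G : SimpleGraph V) (k : ℕ) (v : Fin k → V) : Prop :=
  ∃ d : ℕ, ∀ (i : ℕ) (h : i + 1 < k),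
    G.dist (v ⟨i, by omega⟩) (v ⟨i + 1, h⟩) = d

/-- The coloring `c` admits a rainbow `k`-AP in `G`: a `k`-AP whose vertices
are pairwise distinct and receive pairwise distinct colors. -/
def HasRainbowAP {V α : Type*} (G : SimpleGraph V) (k : ℕ) (c : V → α) : Prop :=
  ∃ v : Fin k → V, IsAPIn G k v ∧ Function.Injective (c ∘ v)

/-- The anti-van der Waerden number `aw(G,k)`: the least positive `r` such that
every exact `r`-coloring of `G` contains a rainbow `k`-AP.  (For `r = |V(G)|+1`
there is no surjection onto `r` colors, so the defining set is nonempty and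
`aw(G,k) ≤ |V(G)|+1` automatically, matching the convention.) -/
noncomputable def aw {V : Type*} [Fintype V] (G : SimpleGraph V) (k : ℕ) : ℕ :=
  sInf {r : ℕ | 0 < r ∧ ∀ c : V → Fin r, Function.Surjective c → HasRainbowAP G k c}

/-!
Give two opposite corners of the grid a color each and all other vertices a third color. The corners
are at odd distance and every vertex lies on a geodesic between them, so no 3-AP is rainbow.

Conversely, in a rainbow-free coloring of `P_2 □ P_n` take a shortest block of consecutive columns
with three colors. Some color occurs in it only in the first column and some color only in the last,
which forces the two vertices into different rows and the number of columns to be odd, and excludes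
any further column on either side. Hence for even `n` there are at most two colors. For odd `n` the
two blocks of `n - 1` columns have at most two colors each and overlap, leaving at most three.
-/

section Aw

variable {V α β : Type*} {G : SimpleGraph V} {k r : ℕ}

theorem HasRainbowAP.of_comp {c : V → α} {g : α → β} (h : HasRainbowAP G k (g ∘ c)) :
    HasRainbowAP G k c := by
  obtain ⟨v, hv, hinj⟩ := h
  exact ⟨v, hv, Function.Injective.of_comp (f := g) hinj⟩

theorem hasRainbowAP_three_iff {c : V → α} :
    HasRainbowAP G 3 c ↔ ∃ u v w, G.dist u v = G.dist v w ∧ c u ≠ c v ∧ c v ≠ c w ∧ c u ≠ c w := by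
  constructor
  · rintro ⟨v, ⟨d, hd⟩, hinj⟩
    exact ⟨v 0, v 1, v 2, (hd 0 (by lia)).trans (hd 1 (by lia)).symm,
      hinj.ne (by decide), hinj.ne (by decide), hinj.ne (by decide)⟩
  · rintro ⟨u, v, w, hd, huv, hvw, huw⟩
    refine ⟨![u, v, w], ⟨G.dist v w, fun i hi => ?_⟩, fun s t hst => ?_⟩
    · obtain rfl | rfl : i = 0 ∨ i = 1 := by lia
      · exact hd
      · rfl
    · fin_cases s <;> fin_cases t <;> simp_all

theorem aw_le [Fintype V] (hr : 0 < r)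
    (h : ∀ c : V → Fin r, Function.Surjective c → HasRainbowAP G k c) : aw G k ≤ r :=
  Nat.sInf_le ⟨hr, h⟩

/-- Merging color classes cannot create a rainbow progression, so a rainbow-free exact coloring
yields rainbow-free exact colorings with any smaller positive number of colors. -/
theorem lt_aw [Fintype V] {c : V → Fin r} (hc : Function.Surjective c)
    (hno : ¬ HasRainbowAP G k c) : r < aw G k := by
  rw [aw, ← Nat.succ_le_iff]
  apply le_csInf
  · refine ⟨Fintype.card V + 1, Nat.succ_pos _, fun c' hc' => ?_⟩
    have hcard := Fintype.card_le_of_surjective c' hc'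
    simp only [Fintype.card_fin] at hcard
    lia
  · rintro s ⟨hs, h⟩
    by_contra hsr
    have : Nonempty (Fin s) := ⟨⟨0, hs⟩⟩
    have hmerge := Function.invFun_surjective (Fin.castLE_injective (show s ≤ r by lia))
    exact hno (h _ (hmerge.comp hc)).of_comp

end Aw

section Antipodal

variable {V : Type*} [DecidableEq V] {G : SimpleGraph V} {a b : V}

/-- The 3-coloring in which each of the vertices `a` and `b` has a color of its own and all other
vertices share the third color. -/
def twoPointColoring (a b : V) (v : V) : Fin 3 :=
  if v = a then 0 else if v = b then 1 else 2

theorem twoPointColoring_surjective (hab : a ≠ b) {v : V} (hva : v ≠ a) (hvb : v ≠ b) :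
    Function.Surjective (twoPointColoring a b) := by
  intro s
  fin_cases s
  · exact ⟨a, by simp [twoPointColoring]⟩
  · exact ⟨b, by simp [twoPointColoring, hab.symm]⟩
  · exact ⟨v, by simp [twoPointColoring, hva, hvb]⟩

/-- A rainbow progression uses `a`, `b` and a third vertex `w`. If `w` is in the middle, then
`dist a b = 2 * dist a w` is even; if `a` is in the middle, then `dist w b = 0`. -/
theorem not_hasRainbowAP_twoPointColoring (hG : G.Connected) (hodd : Odd (G.dist a b))
    (hgeo : ∀ v, G.dist a v + G.dist v b = G.dist a b) :
    ¬ HasRainbowAP G 3 (twoPointColoring a b) := by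
  have eq_of_dist_left (v : V) (h : G.dist a v = G.dist a b) : v = b :=
    hG.dist_eq_zero_iff.mp (by have := hgeo v; lia)
  have eq_of_dist_right (v : V) (h : G.dist v b = G.dist a b) : v = a :=
    (hG.dist_eq_zero_iff.mp (by have := hgeo v; lia)).symm
  have not_midpoint (v : V) : G.dist a v ≠ G.dist v b := by
    intro h
    have := hgeo v
    obtain ⟨m, hm⟩ := hodd
    lia
  rw [hasRainbowAP_three_iff]
  rintro ⟨u, v, w, hd, huv, hvw, huw⟩
  have := not_midpoint v
  have := G.dist_comm (u := u) (v := v)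
  have := G.dist_comm (u := w) (v := v)
  simp only [twoPointColoring] at huv hvw huw
  grind

end Antipodal

section GridDistance

theorem exists_walk_pathGraph_length_eq {n : ℕ} (m : ℕ) :
    ∀ {u v : Fin n}, (v : ℕ) = u + m → ∃ p : (pathGraph n).Walk u v, p.length = m := by
  induction m with
  | zero =>
    intro u v h
    obtain rfl : v = u := Fin.ext h
    exact ⟨.nil, rfl⟩
  | succ m ih =>
    intro u v h
    obtain ⟨p, hp⟩ := ih (u := ⟨u + 1, by lia⟩) (v := v) (by grind)
    exact ⟨.cons (pathGraph_adj.mpr (.inl rfl)) p, by simp [hp]⟩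

theorem natAbs_sub_le_length_of_walk_pathGraph {n : ℕ} {u v : Fin n} (p : (pathGraph n).Walk u v) :
    ((u : ℤ) - v).natAbs ≤ p.length := by
  induction p with
  | nil => simp
  | cons h p ih =>
    rw [pathGraph_adj] at h
    rw [Walk.length_cons]
    lia

theorem dist_pathGraph {n : ℕ} (u v : Fin n) :
    (pathGraph n).dist u v = ((u : ℤ) - v).natAbs := by
  apply le_antisymm
  · wlog huv : u ≤ v generalizing u v
    · rw [dist_comm, ← Int.natAbs_neg, neg_sub]
      exact this v u (le_of_not_ge huv)
    obtain ⟨p, hp⟩ := exists_walk_pathGraph_length_eq (v - u : ℕ) (u := u) (v := v) (by lia)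
    exact (dist_le p).trans (by lia)
  · obtain ⟨p, hp⟩ := (pathGraph_preconnected n u v).exists_walk_length_eq_dist
    exact hp ▸ natAbs_sub_le_length_of_walk_pathGraph p

theorem dist_boxProd {V W : Type*} {G : SimpleGraph V} {H : SimpleGraph W}
    (hG : G.Preconnected) (hH : H.Preconnected) (u v : V × W) :
    (G □ H).dist u v = G.dist u.1 v.1 + H.dist u.2 v.2 := by
  rw [SimpleGraph.dist, edist_boxProd, ← (hG u.1 v.1).coe_dist_eq_edist,
    ← (hH u.2 v.2).coe_dist_eq_edist]
  norm_cast

theorem dist_pathGraph_boxProd {m n : ℕ} (u v : Fin m × Fin n) :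
    (pathGraph m □ pathGraph n).dist u v =
      ((u.1 : ℤ) - v.1).natAbs + ((u.2 : ℤ) - v.2).natAbs := by
  rw [dist_boxProd (pathGraph_preconnected m) (pathGraph_preconnected n), dist_pathGraph,
    dist_pathGraph]

theorem exists_surjective_fin_three_not_hasRainbowAP {m n : ℕ} (hm : 0 < m) (hn : 0 < n)
    (hodd : Odd (m + n)) :
    ∃ c : Fin (m + 1) × Fin (n + 1) → Fin 3, Function.Surjective c ∧
      ¬ HasRainbowAP (pathGraph (m + 1) □ pathGraph (n + 1)) 3 c := by
  let a : Fin (m + 1) × Fin (n + 1) := (0, 0)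
  let b : Fin (m + 1) × Fin (n + 1) := (Fin.last m, Fin.last n)
  have dist_a (v) : (pathGraph (m + 1) □ pathGraph (n + 1)).dist a v = v.1 + v.2 := by
    simp [dist_pathGraph_boxProd, a]
  have dist_b (v) : (pathGraph (m + 1) □ pathGraph (n + 1)).dist v b = (m - v.1) + (n - v.2) := by
    have := v.1.is_le
    have := v.2.is_le
    simp only [dist_pathGraph_boxProd, b, Fin.val_last]
    lia
  have dist_ab : (pathGraph (m + 1) □ pathGraph (n + 1)).dist a b = m + n := dist_a b
  refine ⟨twoPointColoring a b,
    twoPointColoring_surjective (v := (Fin.last m, 0)) ?_ ?_ ?_,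
    not_hasRainbowAP_twoPointColoring ?_ ?_ ?_⟩
  · grind
  · grind
  · grind
  · exact (pathGraph_connected m).boxProd (pathGraph_connected n)
  · rwa [dist_ab]
  · intro v
    rw [dist_a, dist_b, dist_ab]
    lia

end GridDistance

section Ladder

variable {α : Type*} {c : Fin 2 × ℤ → α} {S T : Set (Fin 2 × ℤ)} {a b i j : ℤ} {x y : Fin 2}

/-- The graph distance of the ladder with two rows and columns indexed by `ℤ`, every finite
stretch of which is a copy of some `P_2 □ P_n`. -/
@[grind =]
def ladderDist (u v : Fin 2 × ℤ) : ℕ :=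
  ((u.1 : ℤ) - v.1).natAbs + (u.2 - v.2).natAbs

/-- The vertices of the ladder in the columns `i, …, j`, both ends included. -/
def window (i j : ℤ) : Set (Fin 2 × ℤ) :=
  Prod.snd ⁻¹' Set.Icc i j

/-- The coloring `c` of the ladder has no rainbow 3-AP with all its vertices in `S`. -/
def RainbowFreeOn (c : Fin 2 × ℤ → α) (S : Set (Fin 2 × ℤ)) : Prop :=
  ∀ u ∈ S, ∀ v ∈ S, ∀ w ∈ S, ladderDist u v = ladderDist v w →
    c u = c v ∨ c v = c w ∨ c u = c w

/-- In the window `i, …, j` the color of `(x, i)` occurs only in the first column and the color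
of `(y, j)` only in the last one. This is what a shortest window with three colors looks like. -/
structure IsTight (c : Fin 2 × ℤ → α) (i j : ℤ) (x y : Fin 2) : Prop where
  ne_left : ∀ u ∈ window (i + 1) j, c u ≠ c (x, i)
  ne_right : ∀ u ∈ window i (j - 1), c u ≠ c (y, j)

@[simp, grind =]
theorem mem_window {u : Fin 2 × ℤ} : u ∈ window i j ↔ i ≤ u.2 ∧ u.2 ≤ j :=
  Iff.rfl

theorem window_subset_window (hi : a ≤ i) (hj : j ≤ b) : window i j ⊆ window a b :=
  Set.preimage_mono (Set.Icc_subset_Icc hi hj)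

theorem RainbowFreeOn.mono (h : RainbowFreeOn c T) (hST : S ⊆ T) : RainbowFreeOn c S :=
  fun u hu v hv w hw => h u (hST hu) v (hST hv) w (hST hw)

theorem RainbowFreeOn.reflect (h : RainbowFreeOn c (window i j)) :
    RainbowFreeOn (fun u => c (u.1, -u.2)) (window (-j) (-i)) := by
  simp only [RainbowFreeOn, mem_window, ladderDist] at h ⊢
  intro u hu v hv w hw hd
  exact h (u.1, -u.2) (by grind) (v.1, -v.2) (by grind) (w.1, -w.2) (by grind) (by grind)

theorem IsTight.reflect (h : IsTight c i j x y) :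
    IsTight (fun u => c (u.1, -u.2)) (-j) (-i) y x := by
  obtain ⟨hl, hr⟩ := h
  simp only [mem_window] at hl hr
  constructor <;> simp only [mem_window, neg_neg]
  · exact fun u hu => hr (u.1, -u.2) (by grind)
  · exact fun u hu => hl (u.1, -u.2) (by grind)

theorem IsTight.ne_ends (h : IsTight c i j x y) (hij : i < j) : c (x, i) ≠ c (y, j) :=
  h.ne_right (x, i) (by grind)

theorem IsTight.row_ne (h : IsTight c i j x y) (hfree : RainbowFreeOn c (window i j))
    (hij : i + 2 ≤ j) : x ≠ y := by
  rintro rfl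
  obtain ⟨z, hz⟩ : ∃ z, z ≠ x := exists_ne x
  have hl := h.ne_left (z, j - 1) (by grind)
  have hr := h.ne_right (z, j - 1) (by grind)
  have hne := h.ne_ends (by lia)
  have := hfree (x, j) (by grind) (x, i) (by grind) (z, j - 1) (by grind) (by grind)
  grind

theorem IsTight.even (h : IsTight c i j x y) (hfree : RainbowFreeOn c (window i j))
    (hij : i + 2 ≤ j) : Even (j - i) := by
  have hxy := h.row_ne hfree hij
  by_contra hodd
  obtain ⟨m, hm⟩ := Int.not_even_iff_odd.mp hodd
  have hl := h.ne_left (x, i + m + 1) (by grind)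
  have hr := h.ne_right (x, i + m + 1) (by grind)
  have hne := h.ne_ends (by lia)
  have := hfree (x, i) (by grind) (x, i + m + 1) (by grind) (y, j) (by grind) (by grind)
  grind

/-- The vertex `(x, j + 1)` is forced to have the color of `(y, j)`, and then it forms a rainbow
progression with `(x, i)` and `(y, i + 1)`. -/
theorem IsTight.not_rainbowFreeOn_right (h : IsTight c i j x y) (hij : i + 2 ≤ j) :
    ¬ RainbowFreeOn c (window i (j + 1)) := by
  intro hfree
  have hfree' := hfree.mono (window_subset_window le_rfl (by lia : j ≤ j + 1))
  have hxy := h.row_ne hfree' hij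
  have hends := h.ne_ends (by lia)
  obtain ⟨m, hm⟩ := h.even hfree' hij
  have corner_ne_left : c (x, j) ≠ c (x, i) := h.ne_left _ (by grind)
  have corner_ne_right : c (x, j) ≠ c (y, j) := by
    have hl := h.ne_left (x, i + m) (by grind)
    have hr := h.ne_right (x, i + m) (by grind)
    have := hfree (x, i) (by grind) (x, i + m) (by grind) (x, j) (by grind) (by grind)
    grind
  have next_ne_left : c (x, j + 1) ≠ c (x, i) := by
    have := hfree (y, j) (by grind) (x, j) (by grind) (x, j + 1) (by grind) (by grind)
    grind
  have next_eq_right : c (x, j + 1) = c (y, j) := by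
    have := hfree (x, j + 1) (by grind) (x, i) (by grind) (y, j) (by grind) (by grind)
    grind
  have hl := h.ne_left (y, i + 1) (by grind)
  have hr := h.ne_right (y, i + 1) (by grind)
  have := hfree (x, i) (by grind) (x, j + 1) (by grind) (y, i + 1) (by grind) (by grind)
  grind

theorem IsTight.not_rainbowFreeOn_left (h : IsTight c i j x y) (hij : i + 2 ≤ j) :
    ¬ RainbowFreeOn c (window (i - 1) j) := by
  intro hfree
  refine h.reflect.not_rainbowFreeOn_right (by lia) ?_
  simpa only [neg_sub, sub_eq_add_neg, neg_add_rev, neg_neg, add_comm] using hfree.reflect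

theorem exists_isTight (h : 2 < (c '' window i j).encard)
    (hl : (c '' window (i + 1) j).encard ≤ 2) (hr : (c '' window i (j - 1)).encard ≤ 2) :
    ∃ x y, IsTight c i j x y := by
  have new_color {T : Set (Fin 2 × ℤ)} (hT : (c '' T).encard ≤ 2) :
      ∃ u ∈ window i j, ∀ v ∈ T, c v ≠ c u := by
    by_contra! hsub
    refine (h.trans_le (Set.encard_le_encard ?_)).not_ge hT
    rintro _ ⟨u, hu, rfl⟩
    exact hsub u hu
  obtain ⟨⟨x, p⟩, hp, hx⟩ := new_color hl
  obtain ⟨⟨y, q⟩, hq, hy⟩ := new_color hr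
  obtain rfl : p = i := by
    by_contra hne
    exact hx (x, p) (by grind) rfl
  obtain rfl : q = j := by
    by_contra hne
    exact hy (y, q) (by grind) rfl
  exact ⟨x, y, hx, hy⟩

/-- Any three vertices of a 4-cycle form a progression. -/
theorem RainbowFreeOn.encard_image_square_le_two (h : RainbowFreeOn c (window i (i + 1))) :
    (c '' window i (i + 1)).encard ≤ 2 := by
  by_contra! hlt
  obtain ⟨t, ht, ht3⟩ := Set.exists_subset_encard_eq (Order.add_one_le_of_lt hlt)
  obtain ⟨p, q, r, hpq, hpr, hqr, rfl⟩ := Set.encard_eq_three.mp ht3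
  simp only [Set.insert_subset_iff, Set.singleton_subset_iff] at ht
  obtain ⟨⟨u, hu, rfl⟩, ⟨v, hv, rfl⟩, ⟨w, hw, rfl⟩⟩ := ht
  have huvw := h u hu v hv w hw
  have hvwu := h v hv w hw u hu
  have hwuv := h w hw u hu v hv
  grind

/-- Otherwise a shortest window with three colors is tight and has an odd number of columns, so
the even window `a, …, b` extends it by a column on one side. -/
theorem RainbowFreeOn.encard_image_window_le_two (h : RainbowFreeOn c (window a b))
    (hab : a < b) (hodd : Odd (b - a)) : (c '' window a b).encard ≤ 2 := by
  suffices hsub : ∀ (n : ℕ) (i : ℤ), a ≤ i → i + 1 + n ≤ b →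
      (c '' window i (i + 1 + n)).encard ≤ 2 by
    obtain ⟨n, rfl⟩ := Int.le.dest (Int.add_one_le_of_lt hab)
    exact hsub n a le_rfl le_rfl
  intro n
  induction n with
  | zero =>
    intro i hi hib
    simp only [Nat.cast_zero, add_zero] at hib ⊢
    exact (h.mono (window_subset_window hi hib)).encard_image_square_le_two
  | succ n ih =>
    intro i hi hib
    by_contra! hlt
    set j : ℤ := i + 1 + (n + 1 : ℕ)
    have hl : i + 1 + 1 + n = j := by lia
    have hr : i + 1 + n = j - 1 := by lia
    obtain ⟨x, y, htight⟩ := exists_isTight hlt (hl ▸ ih (i + 1) (by lia) (by lia))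
      (hr ▸ ih i hi (by lia))
    have heven := htight.even (h.mono (window_subset_window hi hib)) (by lia)
    obtain hai | hjb : a ≤ i - 1 ∨ j + 1 ≤ b := by
      obtain ⟨p, hp⟩ := hodd
      obtain ⟨q, hq⟩ := heven
      lia
    · exact htight.not_rainbowFreeOn_left (by lia) (h.mono (window_subset_window hai hib))
    · exact htight.not_rainbowFreeOn_right (by lia) (h.mono (window_subset_window hi hjb))

theorem RainbowFreeOn.encard_image_window_le_three (h : RainbowFreeOn c (window a b))
    (hab : a + 1 < b) (heven : Even (b - a)) : (c '' window a b).encard ≤ 3 := by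
  have hinit : (c '' window a (b - 1)).encard ≤ 2 :=
    (h.mono (window_subset_window le_rfl (by lia))).encard_image_window_le_two (by lia)
      (by simpa only [sub_right_comm] using heven.sub_odd odd_one)
  have htail : (c '' window (a + 1) b).encard ≤ 2 :=
    (h.mono (window_subset_window (by lia) le_rfl)).encard_image_window_le_two hab
      (by simpa only [sub_sub] using heven.sub_odd odd_one)
  have hunion : window a b = window a (b - 1) ∪ window (a + 1) b := by
    ext u
    simp only [Set.mem_union, mem_window]
    lia
  have hinter : 1 ≤ (c '' window a (b - 1) ∩ c '' window (a + 1) b).encard := by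
    rw [Set.one_le_encard_iff_nonempty]
    exact ⟨c (0, a + 1), ⟨_, by grind, rfl⟩, ⟨_, by grind, rfl⟩⟩
  have hsum := Set.encard_union_add_encard_inter (c '' window a (b - 1)) (c '' window (a + 1) b)
  rw [hunion, Set.image_union]
  refine (ENat.add_le_add_iff_right ENat.one_ne_top).mp ?_
  calc (c '' window a (b - 1) ∪ c '' window (a + 1) b).encard + 1
      ≤ (c '' window a (b - 1)).encard + (c '' window (a + 1) b).encard :=
        hsum ▸ add_le_add_right hinter _
    _ ≤ 2 + 2 := add_le_add hinit htail
    _ = 3 + 1 := by norm_num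

end Ladder

section TwoRowGrid

variable {n : ℕ}

/-- The isometric embedding of `P_2 □ P_n` into the ladder as the columns `0, …, n - 1`. -/
def toLadder (u : Fin 2 × Fin n) : Fin 2 × ℤ :=
  (u.1, u.2)

theorem toLadder_injective : Function.Injective (toLadder (n := n)) := by
  rintro ⟨x, i⟩ ⟨y, j⟩ h
  simpa [toLadder, Fin.ext_iff] using h

theorem range_toLadder : Set.range (toLadder (n := n)) = window 0 (n - 1) := by
  ext u
  constructor
  · rintro ⟨v, rfl⟩
    grind [toLadder]
  · intro hu
    exact ⟨(u.1, ⟨u.2.toNat, by grind⟩), by grind [toLadder]⟩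

theorem ladderDist_toLadder (u v : Fin 2 × Fin n) :
    ladderDist (toLadder u) (toLadder v) = (pathGraph 2 □ pathGraph n).dist u v :=
  (dist_pathGraph_boxProd u v).symm

theorem rainbowFreeOn_range_toLadder {α : Type*} {c : Fin 2 × ℤ → α}
    (h : ¬ HasRainbowAP (pathGraph 2 □ pathGraph n) 3 (c ∘ toLadder)) :
    RainbowFreeOn c (Set.range (toLadder (n := n))) := by
  rintro _ ⟨u, rfl⟩ _ ⟨v, rfl⟩ _ ⟨w, rfl⟩ hd
  rw [ladderDist_toLadder, ladderDist_toLadder] at hd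
  by_contra! hne
  exact h (hasRainbowAP_three_iff.mpr ⟨u, v, w, hd, hne⟩)

theorem encard_range_le_three_of_not_hasRainbowAP {α : Type*} {c : Fin 2 × Fin n → α}
    (hn : Odd n) (hn3 : 3 ≤ n) (h : ¬ HasRainbowAP (pathGraph 2 □ pathGraph n) 3 c) :
    (Set.range c).encard ≤ 3 := by
  let c' : Fin 2 × ℤ → α := Function.extend toLadder c fun _ => c (0, ⟨0, by lia⟩)
  have hc' : c' ∘ toLadder = c := Function.extend_comp toLadder_injective _ _
  rw [← hc'] at h
  rw [← hc', Set.range_comp, range_toLadder]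
  have hfree := rainbowFreeOn_range_toLadder h
  rw [range_toLadder] at hfree
  obtain ⟨m, rfl⟩ := hn
  exact hfree.encard_image_window_le_three (by lia) ⟨m, by lia⟩

end TwoRowGrid

/-- for every `k ≥ 1`, `aw(P_2 □ P_{2k+1}, 3) = 4`. -/
theorem aw_p2_podd (k : ℕ) (hk : 1 ≤ k) :
    aw (pathGraph 2 □ pathGraph (2 * k + 1)) 3 = 4 := by
  apply le_antisymm
  · refine aw_le (by lia) fun c hc => ?_
    by_contra hno
    have hcard := encard_range_le_three_of_not_hasRainbowAP (odd_two_mul_add_one k) (by lia) hno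
    rw [hc.range_eq, Set.encard_univ, ENat.card_eq_coe_fintype_card, Fintype.card_fin] at hcard
    exact absurd hcard (by decide)
  · obtain ⟨c, hc, hno⟩ := exists_surjective_fin_three_not_hasRainbowAP one_pos
      (by lia : 0 < 2 * k) ⟨k, add_comm _ _⟩
    exact lt_aw hc hno
end

section
/- If G and H are connected graphs each with at least 2 vertices, then aw(G □ H, 3) ≤ 4; that is, every exact 4-coloring of the Cartesian product G □ H contains a rainbow 3-AP. -/
open SimpleGraph

/-!
In a coloring without rainbow progressions every row and every column uses at most two colors. Join
two colors by an edge if they occur together in some row or column. No color is isolated, and any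
two edges meet: a row and a column share a color where they cross, while disjoint edges from two
rows would give a rectangle with four differently colored corners, which the Euclidean algorithm on
the side lengths shrinks to nothing. A graph with these properties on at least four vertices is a
star, so three of the colors are pairwise nonadjacent. Take a closest pair of vertices with two
different colors among these three, and let `S` be the sphere around the first vertex that passes
through the second. Vertices of `S` only use the two colors of the pair. A vertex of the third color
cannot share its column with a vertex of `S`, hence `S` ends before reaching that column; but then a
walk along `S` shows that the two colors of the pair are equal.
-/

/-- The coloring `c` of `G` has no rainbow 3-AP. A progression `u, m, v` is quantified by its middle
vertex `m` and its two end vertices. -/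
def RainbowFree {V α : Type*} (G : SimpleGraph V) (c : V → α) : Prop :=
  ∀ ⦃m u v⦄, G.dist m u = G.dist m v → c u = c m ∨ c v = c m ∨ c u = c v

section Metric

variable {V : Type*} {G : SimpleGraph V}

theorem dist_getVert_getVert {u v : V} {w : G.Walk u v} (hw : w.length = G.dist u v) {i j : ℕ}
    (hij : i ≤ j) (hj : j ≤ w.length) : G.dist (w.getVert i) (w.getVert j) = j - i := by
  have hsub : ((w.drop i).take (j - i)).IsSubwalk w :=
    ((w.drop i).isSubwalk_take _).trans (w.isSubwalk_drop i)
  have h := length_eq_dist_of_subwalk hw hsub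
  rw [Walk.take_length, Walk.drop_length, Walk.drop_getVert] at h
  grind

theorem exists_dist_eq_dist_eq_sub (hG : G.Connected) (u v : V) {n : ℕ} (hn : n ≤ G.dist u v) :
    ∃ s, G.dist u s = n ∧ G.dist s v = G.dist u v - n := by
  obtain ⟨w, hw⟩ := hG.exists_walk_length_eq_dist u v
  have hstart := dist_getVert_getVert hw n.zero_le (hn.trans hw.ge)
  have hend := dist_getVert_getVert hw (hn.trans hw.ge) le_rfl
  rw [w.getVert_zero] at hstart
  rw [w.getVert_length, hw] at hend
  exact ⟨w.getVert n, hstart, hend⟩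

theorem exists_adj_apply_ne {α : Type*} (hG : G.Connected) {f : V → α} {a b : V}
    (hab : f a ≠ f b) : ∃ u v, G.Adj u v ∧ f u ≠ f v := by
  obtain ⟨w⟩ := hG a b
  obtain ⟨d, -, hfst, hsnd⟩ := w.exists_boundary_dart {x | f x = f a} rfl hab.symm
  exact ⟨d.fst, d.snd, d.adj, fun h => hsnd (h.symm.trans hfst)⟩

theorem dist_boxProd_s15 {W : Type*} {H : SimpleGraph W} (hG : G.Connected) (hH : H.Connected)
    (p q : V × W) : (G □ H).dist p q = G.dist p.1 q.1 + H.dist p.2 q.2 := by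
  have h := edist_boxProd (G := G) (H := H) p q
  rw [← (hG p.1 q.1).coe_dist_eq_edist, ← (hH p.2 q.2).coe_dist_eq_edist,
    ← (hG.boxProd hH p q).coe_dist_eq_edist] at h
  exact_mod_cast h

end Metric

theorem exists_apply_ne_and_apply_ne {X α β : Type*} {f : X → α} {g : X → β} {a b a' b' : X}
    (hf : f a ≠ f b) (hg : g a' ≠ g b') : ∃ x x', f x ≠ f x' ∧ g x ≠ g x' := by
  by_cases hab : g a = g b
  · obtain ⟨z, hz⟩ : ∃ z, g z ≠ g a := by
      by_contra! h
      exact hg ((h a').trans (h b').symm)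
    by_cases hfz : f z = f a
    · exact ⟨z, b, hfz ▸ hf, hab ▸ hz⟩
    · exact ⟨z, a, hfz, hz⟩
  · exact ⟨a, b, hf, hab⟩

theorem exists_closest_apply_ne {V α : Type*} (d : V → V → ℕ) {c : V → α} (hsurj : c.Surjective)
    {T : Set α} (hT : T.Nontrivial) :
    ∃ p q, c p ∈ T ∧ c q ∈ T ∧ c p ≠ c q ∧ ∀ r, c r ∈ T → c r ≠ c p → d p q ≤ d p r := by
  obtain ⟨a, ha, b, hb, hab⟩ := hT
  obtain ⟨p₀, rfl⟩ := hsurj a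
  obtain ⟨q₀, rfl⟩ := hsurj b
  obtain ⟨⟨p, q⟩, ⟨hp, hq, hpq⟩, hmin⟩ :=
    exists_minimalFor_of_wellFoundedLT (fun r : V × V => c r.1 ∈ T ∧ c r.2 ∈ T ∧ c r.1 ≠ c r.2)
      (fun r => d r.1 r.2) ⟨(p₀, q₀), ha, hb, hab⟩
  exact ⟨p, q, hp, hq, hpq, fun r hr hne =>
    (le_total _ _).elim (hmin (j := (p, r)) ⟨hp, hr, hne.symm⟩) id⟩

theorem exists_notMem_of_card_lt_enatCard {V : Type*} {t : Finset V}
    (ht : (t.card : ℕ∞) < ENat.card V) : ∃ v, v ∉ t := by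
  by_contra! h
  rw [← Set.encard_univ, ← Set.eq_univ_of_forall (s := t) h,
    Set.encard_coe_eq_coe_finsetCard] at ht
  exact ht.false

section IntersectingEdges

variable {V : Type*} {L : SimpleGraph V}

theorem not_indepSetFree_three_of_claw
    (hinter : ∀ ⦃a a' b b'⦄, L.Adj a a' → L.Adj b b' → a = b ∨ a = b' ∨ a' = b ∨ a' = b')
    {v x y z : V} (hx : L.Adj v x) (hy : L.Adj v y) (hz : L.Adj v z) (hxy : x ≠ y) (hxz : x ≠ z)
    (hyz : y ≠ z) : ¬ L.IndepSetFree 3 := by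
  classical
  have hxy' : ¬ L.Adj x y := fun h => by grind [hinter h hz, hx.ne, hy.ne]
  have hxz' : ¬ L.Adj x z := fun h => by grind [hinter h hy, hx.ne, hz.ne]
  have hyz' : ¬ L.Adj y z := fun h => by grind [hinter h hx, hy.ne, hz.ne]
  refine fun hfree => hfree {x, y, z} ⟨?_, Finset.card_eq_three.mpr ⟨x, y, z, hxy, hxz, hyz, rfl⟩⟩
  simp [IsIndepSet, Set.pairwise_insert, L.adj_comm, hxy', hxz', hyz']

theorem not_indepSetFree_three_of_adj_inter (hV : 4 ≤ ENat.card V) (hadj : ∀ a, ∃ b, L.Adj a b)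
    (hinter : ∀ ⦃a a' b b'⦄, L.Adj a a' → L.Adj b b' → a = b ∨ a = b' ∨ a' = b ∨ a' = b') :
    ¬ L.IndepSetFree 3 := by
  classical
  have hfresh : ∀ t : Finset V, t.card ≤ 3 → ∃ v, v ∉ t := fun t ht =>
    exists_notMem_of_card_lt_enatCard (lt_of_lt_of_le (by norm_cast; omega) hV)
  obtain ⟨i, -⟩ := hfresh ∅ (by simp)
  obtain ⟨j, hij⟩ := hadj i
  obtain ⟨k, hk⟩ := hfresh {i, j} (Finset.card_le_two.trans (by norm_num))
  obtain ⟨l, hl⟩ := hfresh {i, j, k} Finset.card_le_three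
  simp only [Finset.mem_insert, Finset.mem_singleton, not_or] at hk hl
  obtain ⟨k', hkk'⟩ := hadj k
  obtain ⟨l', hll'⟩ := hadj l
  have hk' : k' = i ∨ k' = j := by grind [hinter hij hkk']
  have hl' : l' = k' := by grind [hinter hij hll', hinter hkk' hll']
  subst hl'
  rcases hk' with rfl | rfl
  · exact not_indepSetFree_three_of_claw hinter hij hkk'.symm hll'.symm
      (Ne.symm hk.2) (Ne.symm hl.2.1) (Ne.symm hl.2.2)
  · exact not_indepSetFree_three_of_claw hinter hij.symm hkk'.symm hll'.symm
      (Ne.symm hk.1) (Ne.symm hl.1) (Ne.symm hl.2.2)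

end IntersectingEdges

section RainbowFree

variable {V α : Type*} {G : SimpleGraph V} {c : V → α}

theorem rainbowFree_iff_not_hasRainbowAP : RainbowFree G c ↔ ¬ HasRainbowAP G 3 c := by
  constructor
  · rintro hc ⟨v, ⟨d, hd⟩, hinj⟩
    have := hc (m := v 1) (u := v 0) (v := v 2)
      (by rw [dist_comm]; exact (hd 0 (by norm_num)).trans (hd 1 (by norm_num)).symm)
    have := hinj.ne (show (0 : Fin 3) ≠ 1 by decide)
    have := hinj.ne (show (1 : Fin 3) ≠ 2 by decide)
    have := hinj.ne (show (0 : Fin 3) ≠ 2 by decide)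
    grind
  · intro hno m u v huv
    by_contra! h
    refine hno ⟨![u, m, v], ⟨G.dist m u, fun i hi => ?_⟩, fun i j hij => ?_⟩
    · have : i = 0 ∨ i = 1 := by omega
      rcases this with rfl | rfl
      · simp [dist_comm]
      · simp [huv]
    · fin_cases i <;> fin_cases j <;> simp_all [eq_comm]

theorem RainbowFree.comp_of_dist_eq {W : Type*} {H : SimpleGraph W} (hc : RainbowFree G c)
    {f : W → V} (hf : ∀ a b, G.dist (f a) (f b) = H.dist a b) : RainbowFree H (c ∘ f) :=
  fun m u v h => hc (by rw [hf, hf, h])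

theorem exists_adj_and_three_colors (hG : G.Connected) {x₁ x₂ x₃ : V} (h₁₂ : c x₁ ≠ c x₂)
    (h₁₃ : c x₁ ≠ c x₃) (h₂₃ : c x₂ ≠ c x₃) :
    ∃ u v s, G.Adj u v ∧ c u ≠ c v ∧ c u ≠ c s ∧ c v ≠ c s := by
  obtain ⟨u, v, huv, hne⟩ := exists_adj_apply_ne hG h₁₂
  by_contra! h
  have h₁ := h u v x₁ huv hne
  have h₂ := h u v x₂ huv hne
  have h₃ := h u v x₃ huv hne
  grind +splitImp

theorem exists_closest_of_three_colors (hG : G.Connected) {x₁ x₂ x₃ : V} (h₁₂ : c x₁ ≠ c x₂)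
    (h₁₃ : c x₁ ≠ c x₃) (h₂₃ : c x₂ ≠ c x₃) :
    ∃ u v s, G.Adj u v ∧ c u ≠ c v ∧ c u ≠ c s ∧ c v ≠ c s ∧
      ∀ ⦃u' v' s'⦄, G.Adj u' v' → c u' ≠ c v' → c u' ≠ c s' → c v' ≠ c s' →
        G.dist v s ≤ G.dist v' s' := by
  let IsTriple : V × V × V → Prop := fun ⟨u, v, s⟩ =>
    G.Adj u v ∧ c u ≠ c v ∧ c u ≠ c s ∧ c v ≠ c s
  obtain ⟨⟨u, v, s⟩, ⟨huv, hcuv, hcus, hcvs⟩, hmin⟩ :=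
    exists_minimalFor_of_wellFoundedLT IsTriple (fun t => G.dist t.2.1 t.2.2)
      (by simpa [IsTriple] using exists_adj_and_three_colors hG h₁₂ h₁₃ h₂₃)
  exact ⟨u, v, s, huv, hcuv, hcus, hcvs, fun u' v' s' hadj h h' h'' =>
    (le_total _ _).elim (hmin (j := (u', v', s')) ⟨hadj, h, h', h''⟩) id⟩

/-- Take a bichromatic edge `uv` and a vertex `s` of a third color with `v` as close to `s` as
possible: the path consists of `uv` and a geodesic from `v` to `s`. -/
theorem RainbowFree.exists_geodesic_of_three_colors (hG : G.Connected) (hc : RainbowFree G c)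
    {x₁ x₂ x₃ : V} (h₁₂ : c x₁ ≠ c x₂) (h₁₃ : c x₁ ≠ c x₃) (h₂₃ : c x₂ ≠ c x₃) :
    ∃ (u s : V) (w : G.Walk u s) (b : α), w.length = G.dist u s ∧ 3 ≤ w.length ∧
      c u ≠ c s ∧ c u ≠ b ∧ c s ≠ b ∧ ∀ i, 0 < i → i < w.length → c (w.getVert i) = b := by
  obtain ⟨u, v, s, huv, hcuv, hcus, hcvs, hle⟩ :=
    exists_closest_of_three_colors hG h₁₂ h₁₃ h₂₃
  obtain ⟨w, hw⟩ := hG.exists_walk_length_eq_dist v s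
  have hus : G.dist u s = G.dist v s + 1 := by
    have hge : G.dist v s ≤ G.dist u s := hle huv.symm hcuv.symm hcvs hcus
    have hne : G.dist v s ≠ G.dist u s := fun h => by
      have := hc (m := s) (u := u) (v := v) (by rw [dist_comm, ← h, dist_comm])
      grind
    have htri := hG.dist_triangle (u := u) (v := v) (w := s)
    rw [dist_eq_one_iff_adj.mpr huv] at htri
    omega
  have hlen : (Walk.cons huv w).length = G.dist u s := by rw [Walk.length_cons, hw, hus]
  have hcolor : ∀ i < w.length, c (w.getVert i) = c v := by
    intro i
    induction i with
    | zero => simp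
    | succ i ih =>
      intro hi
      specialize ih (by omega)
      have hadj := w.adj_getVert_succ (i := i) (by omega)
      have hstart := dist_getVert_getVert hw (i + 1).zero_le hi.le
      have hend := dist_getVert_getVert hw hi.le le_rfl
      rw [w.getVert_zero] at hstart
      rw [w.getVert_length] at hend
      by_contra hne
      by_cases hcu : c (w.getVert (i + 1)) = c u
      · have := hle hadj (s' := s) (by grind) (by grind) (by grind)
        omega
      · have := hle huv (s' := w.getVert (i + 1)) hcuv (Ne.symm hcu) (Ne.symm hne)
        omega
  have hvs : 2 ≤ G.dist v s := by
    have hzero : G.dist v s ≠ 0 := fun h => hcvs (by rw [hG.dist_eq_zero_iff.mp h])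
    have hone : G.dist v s ≠ 1 := fun h => by
      have := hc (m := v) (u := u) (v := s) (by rw [h, dist_eq_one_iff_adj.mpr huv.symm])
      grind
    omega
  refine ⟨u, s, .cons huv w, c v, hlen, by omega, hcus, hcuv, hcvs.symm, fun i hi hi' => ?_⟩
  obtain ⟨i, rfl⟩ := Nat.exists_eq_succ_of_ne_zero hi.ne'
  exact hcolor i (by simpa using hi')

end RainbowFree

section BoxProd

variable {VG VH α : Type*} {G : SimpleGraph VG} {H : SimpleGraph VH} {c : VG × VH → α}

namespace RainbowFree

theorem color_of_dist_add_dist_eq (hG : G.Connected) (hH : H.Connected)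
    (hc : RainbowFree (G □ H) c) {x x₁ x₂ : VG} {y y₁ y₂ : VH}
    (h : G.dist x x₁ + H.dist y y₁ = G.dist x x₂ + H.dist y y₂) :
    c (x₁, y₁) = c (x, y) ∨ c (x₂, y₂) = c (x, y) ∨ c (x₁, y₁) = c (x₂, y₂) :=
  hc (by rwa [dist_boxProd_s15 hG hH, dist_boxProd_s15 hG hH])

theorem comp_swap (hG : G.Connected) (hH : H.Connected) (hc : RainbowFree (G □ H) c) :
    RainbowFree (H □ G) (c ∘ Prod.swap) :=
  hc.comp_of_dist_eq fun p q => by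
    rw [dist_boxProd_s15 hG hH, dist_boxProd_s15 hH hG, add_comm, Prod.fst_swap, Prod.fst_swap,
      Prod.snd_swap, Prod.snd_swap]

theorem row (hG : G.Connected) (hH : H.Connected) (hc : RainbowFree (G □ H) c) (y : VH) :
    RainbowFree G (fun x => c (x, y)) :=
  hc.comp_of_dist_eq fun a b => by simp [dist_boxProd_s15 hG hH]

theorem color_eq_of_adj_row (hG : G.Connected) (hH : H.Connected) (hc : RainbowFree (G □ H) c)
    {u v s : VG} {y y₁ : VH} (hy : H.Adj y y₁) (huv : G.Adj u v)
    (hs : G.dist s u = G.dist s v + 1) (hcuv : c (u, y) ≠ c (v, y)) (hcus : c (u, y) ≠ c (s, y))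
    (hcvs : c (v, y) ≠ c (s, y)) : c (v, y₁) = c (u, y) := by
  have hvu := dist_eq_one_iff_adj.mpr huv.symm
  have hyy₁ := dist_eq_one_iff_adj.mpr hy
  have hmid_v := hc.color_of_dist_add_dist_eq hG hH (x := v) (y := y) (x₁ := u) (y₁ := y)
    (x₂ := v) (y₂ := y₁) (by simp [hvu, hyy₁])
  have hmid_s := hc.color_of_dist_add_dist_eq hG hH (x := s) (y := y) (x₁ := u) (y₁ := y)
    (x₂ := v) (y₂ := y₁) (by simp [hs, hyy₁])
  grind

/-- Let `p₀, …, pₙ` be a geodesic whose end vertices are the only ones not colored `b` in row `y`.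
In an adjacent row, `p₁` repeats the color of `p₀` and `pₙ₋₁` that of `pₙ`, so that `(pₙ₋₁, y₁),
(p₁, y₁), (pₙ₋₂, y)` is a rainbow progression. -/
theorem row_two_colors (hG : G.Connected) (hH : H.Connected) [Nontrivial VH]
    (hc : RainbowFree (G □ H) c) (y : VH) (x₁ x₂ x₃ : VG) :
    c (x₁, y) = c (x₂, y) ∨ c (x₁, y) = c (x₃, y) ∨ c (x₂, y) = c (x₃, y) := by
  by_contra! h
  obtain ⟨u, s, w, b, hw, hlen, hus, hub, hsb, hb⟩ :=
    (hc.row hG hH y).exists_geodesic_of_three_colors hG h.1 h.2.1 h.2.2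
  obtain ⟨y₁, hy⟩ := hH.preconnected.exists_adj_of_nontrivial y
  have hyy₁ := dist_eq_one_iff_adj.mpr hy.symm
  set n := w.length
  have hdist {i j} (hij : i ≤ j) (hj : j ≤ n) := dist_getVert_getVert hw hij hj
  have hfirst : c (w.getVert 1, y₁) = c (u, y) := by
    have hadj : G.Adj u (w.getVert 1) := by
      simpa using w.adj_getVert_succ (i := 0) (by omega)
    have hd : G.dist (w.getVert 1) s = n - 1 := by
      simpa [n] using hdist (i := 1) (j := n) (by omega) le_rfl
    have hb₁ : c (w.getVert 1, y) = b := hb 1 (by omega) (by omega)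
    refine hc.color_eq_of_adj_row hG hH hy (s := s) hadj ?_ (hb₁ ▸ hub) hus (hb₁ ▸ hsb.symm)
    rw [dist_comm, ← hw, dist_comm, hd]
    omega
  have hlast : c (w.getVert (n - 1), y₁) = c (s, y) := by
    have hadj : G.Adj s (w.getVert (n - 1)) := by
      simpa [n, show n - 1 + 1 = n by omega] using
        (w.adj_getVert_succ (i := n - 1) (by omega)).symm
    have hd : G.dist u (w.getVert (n - 1)) = n - 1 := by
      simpa using hdist (i := 0) (j := n - 1) (by omega) (by omega)
    have hbn : c (w.getVert (n - 1), y) = b := hb (n - 1) (by omega) (by omega)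
    refine hc.color_eq_of_adj_row hG hH hy (s := u) hadj ?_ (hbn ▸ hsb) hus.symm (hbn ▸ hub.symm)
    rw [hd, ← hw]
    omega
  have hmid := hc.color_of_dist_add_dist_eq hG hH (x := w.getVert 1) (y := y₁)
    (x₁ := w.getVert (n - 1)) (y₁ := y₁) (x₂ := w.getVert (n - 2)) (y₂ := y)
    (by rw [hdist (by omega) (by omega), hdist (by omega) (by omega), dist_self, hyy₁]; omega)
  rw [hfirst, hlast, hb (n - 2) (by omega) (by omega)] at hmid
  grind

theorem column_two_colors (hG : G.Connected) (hH : H.Connected) [Nontrivial VG]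
    (hc : RainbowFree (G □ H) c) (x : VG) (y₁ y₂ y₃ : VH) :
    c (x, y₁) = c (x, y₂) ∨ c (x, y₁) = c (x, y₃) ∨ c (x, y₂) = c (x, y₃) :=
  (hc.comp_swap hG hH).row_two_colors hH hG x y₁ y₂ y₃

end RainbowFree

/-- The corners of the rectangle with columns `x`, `x'` and rows `y`, `y'` receive four different
colors under `c`. -/
def RainbowRectangle (c : VG × VH → α) (x x' : VG) (y y' : VH) : Prop :=
  [c (x, y), c (x', y), c (x, y'), c (x', y')].Nodup

theorem rainbowRectangle_comp_swap {x x' : VG} {y y' : VH} :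
    RainbowRectangle (c ∘ Prod.swap) y y' x x' ↔ RainbowRectangle c x x' y y' := by
  simp only [RainbowRectangle, Function.comp_apply, Prod.swap_prod_mk, List.nodup_cons]
  grind

theorem RainbowRectangle.fst_ne {x x' : VG} {y y' : VH} (h : RainbowRectangle c x x' y y') :
    x ≠ x' := by
  rintro rfl
  simp [RainbowRectangle] at h

namespace RainbowFree

/-- A step of the Euclidean algorithm on the side lengths: the long side can be shortened by the
short one. -/
theorem exists_rainbowRectangle_dist_lt (hG : G.Connected) (hH : H.Connected) [Nontrivial VH]
    (hc : RainbowFree (G □ H) c) {x x' : VG} {y y' : VH} (h : RainbowRectangle c x x' y y')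
    (hle : H.dist y y' ≤ G.dist x x') :
    ∃ s, G.dist x s < G.dist x x' ∧ RainbowRectangle c x s y y' := by
  have hy : H.dist y y' ≠ 0 := fun h₀ =>
    (rainbowRectangle_comp_swap.mpr h).fst_ne (hH.dist_eq_zero_iff.mp h₀)
  rw [dist_comm (u := x)] at hle ⊢
  obtain ⟨s, hx's, hsx⟩ := exists_dist_eq_dist_eq_sub hG x' x hle
  refine ⟨s, by rw [dist_comm]; omega, ?_⟩
  have hrow := hc.row_two_colors hG hH y x x' s
  have hrow' := hc.row_two_colors hG hH y' x x' s
  have hap := hc.color_of_dist_add_dist_eq hG hH (x := x') (y := y) (x₁ := s) (y₁ := y)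
    (x₂ := x') (y₂ := y') (by simp [hx's])
  have hap' := hc.color_of_dist_add_dist_eq hG hH (x := x') (y := y') (x₁ := s) (y₁ := y')
    (x₂ := x') (y₂ := y) (by simp [hx's, dist_comm])
  simp only [RainbowRectangle, List.nodup_cons] at h ⊢
  have hs : c (s, y) = c (x', y) := by grind
  have hs' : c (s, y') = c (x', y') := by grind
  rwa [hs, hs']

theorem not_rainbowRectangle (hG : G.Connected) (hH : H.Connected) [Nontrivial VG]
    [Nontrivial VH] (hc : RainbowFree (G □ H) c) (x x' : VG) (y y' : VH) :
    ¬ RainbowRectangle c x x' y y' := by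
  induction hn : G.dist x x' + H.dist y y' using Nat.strong_induction_on generalizing x' y' with
  | _ n ih =>
  intro h
  rcases le_total (H.dist y y') (G.dist x x') with hle | hle
  · obtain ⟨s, hlt, hs⟩ := hc.exists_rainbowRectangle_dist_lt hG hH h hle
    exact ih _ (by omega) s y' rfl hs
  · obtain ⟨s, hlt, hs⟩ := (hc.comp_swap hG hH).exists_rainbowRectangle_dist_lt hH hG
      (rainbowRectangle_comp_swap.mpr h) hle
    exact ih _ (by omega) x' s rfl (rainbowRectangle_comp_swap.mp hs)

end RainbowFree

/-- The graph on the colors in which two colors are adjacent if some row or column contains both: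
two different vertices of `⊤ □ ⊤` are adjacent exactly when they share a coordinate. -/
def colorGraph (c : VG × VH → α) : SimpleGraph α :=
  ((⊤ : SimpleGraph VG) □ (⊤ : SimpleGraph VH)).map c

theorem colorGraph_adj {a b : α} : (colorGraph c).Adj a b ↔ a ≠ b ∧
    ((∃ x x' y, c (x, y) = a ∧ c (x', y) = b) ∨ ∃ x y y', c (x, y) = a ∧ c (x, y') = b) := by
  constructor
  · rintro ⟨hne, ⟨x, y⟩, ⟨x', y'⟩, ⟨-, rfl : y = y'⟩ | ⟨-, rfl : x = x'⟩, rfl, rfl⟩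
    · exact ⟨hne, .inl ⟨x, x', y, rfl, rfl⟩⟩
    · exact ⟨hne, .inr ⟨x, y, y', rfl, rfl⟩⟩
  · rintro ⟨hne, ⟨x, x', y, rfl, rfl⟩ | ⟨x, y, y', rfl, rfl⟩⟩
    · exact ⟨hne, (x, y), (x', y), .inl ⟨by rintro rfl; exact hne rfl, rfl⟩, rfl, rfl⟩
    · exact ⟨hne, (x, y), (x, y'), .inr ⟨by rintro rfl; exact hne rfl, rfl⟩, rfl, rfl⟩

theorem exists_colorGraph_adj [Nontrivial α] (hsurj : c.Surjective) (a : α) :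
    ∃ b, (colorGraph c).Adj a b := by
  obtain ⟨b, hb⟩ := exists_ne a
  obtain ⟨⟨x, y⟩, rfl⟩ := hsurj a
  obtain ⟨⟨x', y'⟩, rfl⟩ := hsurj b
  by_cases hcorner : c (x', y) = c (x, y)
  · exact ⟨c (x', y'), colorGraph_adj.mpr ⟨hb.symm, .inr ⟨x', y, y', hcorner, rfl⟩⟩⟩
  · exact ⟨c (x', y), colorGraph_adj.mpr ⟨Ne.symm hcorner, .inl ⟨x, x', y, rfl, rfl⟩⟩⟩

namespace RainbowFree

theorem row_colors_inter_row_colors (hG : G.Connected) (hH : H.Connected) [Nontrivial VG]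
    [Nontrivial VH] (hc : RainbowFree (G □ H) c) {x₁ x₂ x₃ x₄ : VG} {y y' : VH}
    (h : c (x₁, y) ≠ c (x₂, y)) (h' : c (x₃, y') ≠ c (x₄, y')) :
    c (x₁, y) = c (x₃, y') ∨ c (x₁, y) = c (x₄, y') ∨ c (x₂, y) = c (x₃, y') ∨
      c (x₂, y) = c (x₄, y') := by
  obtain ⟨x, x', hx, hx'⟩ := exists_apply_ne_and_apply_ne (f := fun x => c (x, y))
    (g := fun x => c (x, y')) h h'
  have hrect := hc.not_rainbowRectangle hG hH x x' y y'
  simp only [RainbowRectangle, List.nodup_cons] at hrect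
  have := hc.row_two_colors hG hH y x₁ x₂ x
  have := hc.row_two_colors hG hH y x₁ x₂ x'
  have := hc.row_two_colors hG hH y' x₃ x₄ x
  have := hc.row_two_colors hG hH y' x₃ x₄ x'
  grind

theorem row_colors_inter_column_colors (hG : G.Connected) (hH : H.Connected) [Nontrivial VG]
    [Nontrivial VH] (hc : RainbowFree (G □ H) c) {x₁ x₂ x : VG} {y₁ y₂ y : VH}
    (h : c (x₁, y) ≠ c (x₂, y)) (h' : c (x, y₁) ≠ c (x, y₂)) :
    c (x₁, y) = c (x, y₁) ∨ c (x₁, y) = c (x, y₂) ∨ c (x₂, y) = c (x, y₁) ∨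
      c (x₂, y) = c (x, y₂) := by
  have := hc.row_two_colors hG hH y x₁ x₂ x
  have := hc.column_two_colors hG hH x y₁ y₂ y
  grind

theorem colorGraph_adj_inter (hG : G.Connected) (hH : H.Connected) [Nontrivial VG]
    [Nontrivial VH] (hc : RainbowFree (G □ H) c) ⦃a a' b b' : α⦄ (h : (colorGraph c).Adj a a')
    (h' : (colorGraph c).Adj b b') : a = b ∨ a = b' ∨ a' = b ∨ a' = b' := by
  rw [colorGraph_adj] at h h'
  obtain ⟨hne, ⟨x₁, x₂, y, rfl, rfl⟩ | ⟨x, y₁, y₂, rfl, rfl⟩⟩ := h <;>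
    obtain ⟨hne', ⟨x₃, x₄, y', rfl, rfl⟩ | ⟨x', y₃, y₄, rfl, rfl⟩⟩ := h'
  · exact hc.row_colors_inter_row_colors hG hH hne hne'
  · exact hc.row_colors_inter_column_colors hG hH hne hne'
  · have := hc.row_colors_inter_column_colors hG hH hne' hne
    grind
  · exact (hc.comp_swap hG hH).row_colors_inter_row_colors hH hG hne hne'

end RainbowFree

variable {T : Set α}

theorem color_eq_of_same_row (hT : (colorGraph c).IsIndepSet T) {x x' : VG} {y : VH}
    (h : c (x, y) ∈ T) (h' : c (x', y) ∈ T) : c (x, y) = c (x', y) := by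
  by_contra hne
  exact hT h h' hne (colorGraph_adj.mpr ⟨hne, .inl ⟨x, x', y, rfl, rfl⟩⟩)

theorem color_eq_of_same_column (hT : (colorGraph c).IsIndepSet T) {x : VG} {y y' : VH}
    (h : c (x, y) ∈ T) (h' : c (x, y') ∈ T) : c (x, y) = c (x, y') := by
  by_contra hne
  exact hT h h' hne (colorGraph_adj.mpr ⟨hne, .inr ⟨x, y, y', rfl, rfl⟩⟩)

namespace RainbowFree

/-- The corner `(x', y)` is the middle of a progression, so one of the two colors occurs there. -/
theorem color_eq_of_adj_of_adj (hG : G.Connected) (hH : H.Connected) (hc : RainbowFree (G □ H) c)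
    (hT : (colorGraph c).IsIndepSet T) {x x' : VG} {y y' : VH} (hx : G.Adj x' x)
    (hy : H.Adj y y') (h : c (x, y) ∈ T) (h' : c (x', y') ∈ T) : c (x, y) = c (x', y') := by
  have hap := hc.color_of_dist_add_dist_eq hG hH (x := x') (y := y) (x₁ := x) (y₁ := y)
    (x₂ := x') (y₂ := y') (by simp [dist_eq_one_iff_adj.mpr hx, dist_eq_one_iff_adj.mpr hy])
  have hrow := color_eq_of_same_row hT (x := x) (x' := x') (y := y) h
  have hcol := color_eq_of_same_column hT (x := x') (y := y') (y' := y) h'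
  grind

/-- Walk along the sphere from the row of `(x, y)` to that of `(x', y')`, moving one step towards
`x` and one step towards `y'` at a time. -/
theorem color_eq_of_sphere_subset (hG : G.Connected) (hH : H.Connected)
    (hc : RainbowFree (G □ H) c) (hT : (colorGraph c).IsIndepSet T) {x x' z : VG} {y y' : VH}
    (hxy : c (x, y) ∈ T)
    (hsphere : ∀ u v, G.dist x u + H.dist y v = G.dist x x' + H.dist y y' → c (u, v) ∈ T)
    (hz : G.dist x x' + H.dist y y' ≤ G.dist x z) : c (x', y') = c (x, y) := by
  set D := G.dist x x' + H.dist y y'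
  obtain ⟨w, hw⟩ := hG.exists_walk_length_eq_dist x z
  obtain ⟨r, hr⟩ := hH.exists_walk_length_eq_dist y y'
  have hdw : ∀ i ≤ D, G.dist x (w.getVert i) = i := fun i hi => by
    simpa using dist_getVert_getVert hw i.zero_le (by omega)
  have hdr : ∀ i ≤ r.length, H.dist y (r.getVert i) = i := fun i hi => by
    simpa using dist_getVert_getVert hr i.zero_le hi
  have hmem : ∀ i ≤ r.length, c (w.getVert (D - i), r.getVert i) ∈ T := fun i hi =>
    hsphere _ _ (by rw [hdw _ (by omega), hdr i hi]; omega)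
  have hchain : ∀ i ≤ r.length, c (w.getVert (D - i), r.getVert i) = c (x, y) := by
    intro i hi
    induction i with
    | zero =>
      have hmem₀ := hmem 0 hi
      rw [r.getVert_zero] at hmem₀ ⊢
      exact color_eq_of_same_row hT hmem₀ hxy
    | succ i ih =>
      have hstep := w.adj_getVert_succ (i := D - (i + 1)) (by omega)
      rw [show D - (i + 1) + 1 = D - i by omega] at hstep
      rw [← ih (by omega)]
      exact (hc.color_eq_of_adj_of_adj hG hH hT hstep (r.adj_getVert_succ (by omega))
        (hmem i (by omega)) (hmem (i + 1) hi)).symm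
  have hlast := hmem r.length le_rfl
  rw [← hchain r.length le_rfl]
  rw [r.getVert_length] at hlast ⊢
  exact color_eq_of_same_row hT (hsphere x' y' rfl) hlast

theorem colorGraph_indepSetFree_three (hG : G.Connected) (hH : H.Connected)
    (hc : RainbowFree (G □ H) c) (hsurj : c.Surjective) : (colorGraph c).IndepSetFree 3 := by
  classical
  intro s hs
  have hT := hs.isIndepSet
  have hnontrivial : (s : Set α).Nontrivial :=
    Finset.one_lt_card_iff_nontrivial.mp (by rw [hs.card_eq]; norm_num)
  obtain ⟨⟨x, y⟩, ⟨x', y'⟩, hp, hq, hpq, hmin⟩ := exists_closest_apply_ne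
    (fun p q : VG × VH => G.dist p.1 q.1 + H.dist p.2 q.2) hsurj hnontrivial
  dsimp only at hmin
  set D := G.dist x x' + H.dist y y' with hD
  have hsphere : ∀ u v, G.dist x u + H.dist y v = D →
      c (u, v) = c (x, y) ∨ c (u, v) = c (x', y') := fun u v huv => by
    have := hc.color_of_dist_add_dist_eq hG hH (huv.trans hD)
    grind
  have hmem : ∀ u v, G.dist x u + H.dist y v = D → c (u, v) ∈ (s : Set α) := fun u v huv => by
    have := hsphere u v huv
    grind
  obtain ⟨a, ha, hane⟩ : ∃ a ∈ s, a ∉ ({c (x, y), c (x', y')} : Finset α) :=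
    Finset.exists_mem_notMem_of_card_lt_card
      (Finset.card_le_two.trans_lt (by rw [hs.card_eq]; norm_num))
  obtain ⟨⟨z₁, z₂⟩, rfl⟩ := hsurj a
  rcases lt_or_ge D (G.dist x z₁) with hlt | hle
  · exact hpq (hc.color_eq_of_sphere_subset hG hH hT hp hmem hlt.le).symm
  · have hDz : D ≤ G.dist x z₁ + H.dist y z₂ := hmin (z₁, z₂) ha (by grind)
    obtain ⟨v, hv, -⟩ := exists_dist_eq_dist_eq_sub hH y z₂ (n := D - G.dist x z₁) (by omega)
    have hz : G.dist x z₁ + H.dist y v = D := by omega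
    have := color_eq_of_same_column hT ha (hmem z₁ v hz)
    have := hsphere z₁ v hz
    grind

end RainbowFree

end BoxProd

theorem aw_boxProd_le_four_general {VG VH α : Type*} [Nontrivial VG] [Nontrivial VH]
    {G : SimpleGraph VG} {H : SimpleGraph VH} (hG : G.Connected) (hH : H.Connected)
    {c : VG × VH → α} (hsurj : c.Surjective) (hα : 4 ≤ ENat.card α) :
    HasRainbowAP (G □ H) 3 c := by
  by_contra hno
  have hc := rainbowFree_iff_not_hasRainbowAP.mpr hno
  have : Nontrivial α := (ENat.one_lt_card_iff_nontrivial α).mp (lt_of_lt_of_le (by norm_num) hα)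
  exact not_indepSetFree_three_of_adj_inter hα (exists_colorGraph_adj hsurj)
    (hc.colorGraph_adj_inter hG hH) (hc.colorGraph_indepSetFree_three hG hH hsurj)

/-- if `G` and `H` are connected graphs each with at least two
vertices, then `aw(G □ H, 3) ≤ 4`. -/
theorem aw_boxProd_le_four {VG VH : Type*} [Fintype VG] [Fintype VH]
    (G : SimpleGraph VG) (H : SimpleGraph VH)
    (hG : G.Connected) (hH : H.Connected)
    (hg2 : 2 ≤ Fintype.card VG) (hh2 : 2 ≤ Fintype.card VH) :
    aw (G □ H) 3 ≤ 4 := by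
  have : Nontrivial VG := Fintype.one_lt_card_iff_nontrivial.mp hg2
  have : Nontrivial VH := Fintype.one_lt_card_iff_nontrivial.mp hh2
  exact Nat.sInf_le ⟨by norm_num, fun c hsurj => aw_boxProd_le_four_general hG hH hsurj (by simp)⟩
end
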